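/- Let (A,B,C,D) with A ∈ ℝ^{n×n}, B ∈ ℝ^{n×m}, C ∈ ℝ^{m×n}, D ∈ ℝ^{m×m} be a minimal realization of an all-pass function. Then for every A-invariant subspace X ⊆ ℝⁿ there exists a symmetric matrix Q with N(Q) positive semidefinite of rank m and ker Q = X. Moreover, if A is unmixed, then for every A-invariant subspace X there is exactly one symmetric matrix Q with N(Q) positive semidefinite of rank m and ker Q = X; i.e., the map Q ↦ ker Q is a bijection between the set of symmetric solutions of the constrained LMI and the set of A-invariant subspaces of ℝⁿ. -/

import Mathlib

open Matrix

noncomputable section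

/-- The pair `(A,B)` is reachable: the columns of `B, AB, …, A^{N-1}B` span the state space. -/
def Reachable {N M : Type*} [Fintype N] [DecidableEq N] [Fintype M]
    (A : Matrix N N ℝ) (B : Matrix N M ℝ) : Prop :=
  Submodule.span ℝ
    {v : N → ℝ | ∃ k < Fintype.card N, ∃ j : M, v = (A ^ k) *ᵥ (fun i => B i j)} = ⊤

/-- The pair `(A,C)` is observable: `⋂_{k<N} ker (C A^k) = {0}`. -/
def Observable {N M : Type*} [Fintype N] [DecidableEq N] [Fintype M]
    (A : Matrix N N ℝ) (C : Matrix M N ℝ) : Prop :=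
  ∀ v : N → ℝ, (∀ k < Fintype.card N, (C * A ^ k) *ᵥ v = 0) → v = 0

/-- The transfer function `z ↦ C (zI - A)⁻¹ B + D` is all-pass: for every real `z ≠ 0`
with `zI - A` and `z⁻¹I - Aᵀ` invertible,
`(C(zI−A)⁻¹B + D) (Bᵀ(z⁻¹I−Aᵀ)⁻¹Cᵀ + Dᵀ) = I`. -/
def AllPass {N M : Type*} [Fintype N] [DecidableEq N] [Fintype M] [DecidableEq M]
    (A : Matrix N N ℝ) (B : Matrix N M ℝ) (C : Matrix M N ℝ) (D : Matrix M M ℝ) : Prop :=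
  ∀ z : ℝ, z ≠ 0 → IsUnit (z • (1 : Matrix N N ℝ) - A) →
    IsUnit (z⁻¹ • (1 : Matrix N N ℝ) - Aᵀ) →
    (C * (z • (1 : Matrix N N ℝ) - A)⁻¹ * B + D) *
      (Bᵀ * (z⁻¹ • (1 : Matrix N N ℝ) - Aᵀ)⁻¹ * Cᵀ + Dᵀ) = 1

/-- `A` is unmixed: no pair of (complex) eigenvalues `λ, μ` of `A` satisfies `λμ = 1`. -/
def Unmixed {N : Type*} [Fintype N] [DecidableEq N] (A : Matrix N N ℝ) : Prop :=
  ∀ lam mu : ℂ, lam ∈ spectrum ℂ (A.map (algebraMap ℝ ℂ)) →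
    mu ∈ spectrum ℂ (A.map (algebraMap ℝ ℂ)) → lam * mu ≠ 1

lemma inv_invariant {n : ℕ} (M N : Matrix (Fin n) (Fin n) ℝ) (h : N * M = 1)
    (U : Submodule ℝ (Fin n → ℝ)) (hU : ∀ v ∈ U, N *ᵥ v ∈ U) : ∀ v ∈ U, M *ᵥ v ∈ U := by
  have h' : M * N = 1 := mul_eq_one_comm.mp h
  have hinj : Function.Injective N.mulVecLin := by
    intro a b hab
    have := congrArg (fun x => M *ᵥ x) hab
    simpa [Matrix.mulVec_mulVec, h'] using this
  have hle : U.map N.mulVecLin ≤ U := by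
    rintro _ ⟨v, hv, rfl⟩
    exact hU v hv
  have heq : U.map N.mulVecLin = U :=
    Submodule.eq_of_le_of_finrank_eq hle (Submodule.equivMapOfInjective _ hinj U).finrank_eq.symm
  intro v hv
  rw [← heq] at hv
  obtain ⟨w, hw, rfl⟩ := hv
  simpa [Matrix.mulVec_mulVec, h'] using hw

lemma reach_dual {n m : ℕ} {A : Matrix (Fin n) (Fin n) ℝ} {B : Matrix (Fin n) (Fin m) ℝ}
    (hreach : Reachable A B) (U : Submodule ℝ (Fin n → ℝ))
    (hA : ∀ v ∈ U, Aᵀ *ᵥ v ∈ U) (hB : ∀ v ∈ U, Bᵀ *ᵥ v = 0) : ∀ v ∈ U, v = 0 := by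
  intro v hv
  have hpow : ∀ k : ℕ, ∀ v ∈ U, (Aᵀ ^ k) *ᵥ v ∈ U := by
    intro k
    induction k with
    | zero => intro v hv; simpa using hv
    | succ k ih =>
      intro v hv
      rw [pow_succ, ← Matrix.mulVec_mulVec]
      exact ih _ (hA v hv)
  have key : ∀ w ∈ Submodule.span ℝ
    {v : Fin n → ℝ | ∃ k < Fintype.card (Fin n), ∃ j : Fin m, v = (A ^ k) *ᵥ (fun i => B i j)},
      v ⬝ᵥ w = 0 := by
    intro w hw
    induction hw using Submodule.span_induction with
    | mem x hx =>
      obtain ⟨k, -, j, rfl⟩ := hx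
      have h1 := congrFun (hB _ (hpow k v hv)) j
      rw [Matrix.dotProduct_mulVec, ← Matrix.mulVec_transpose, Matrix.transpose_pow,
        dotProduct_comm]
      exact h1
    | zero => simp
    | add x y _ _ hx hy => simp [hx, hy]
    | smul a x _ hx => simp [hx]
  have h2 : v ⬝ᵥ v = 0 := key v (by rw [hreach]; trivial)
  exact dotProduct_self_eq_zero.mp h2

lemma sub_one_unit {n m : ℕ} {A P : Matrix (Fin n) (Fin n) ℝ} {B : Matrix (Fin n) (Fin m) ℝ}
    (hreach : Reachable A B) (hP : A * P * Aᵀ - P = B * Bᵀ) : IsUnit (A - 1) := by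
  rw [Matrix.isUnit_iff_isUnit_det, isUnit_iff_ne_zero]
  intro hdet
  rw [← Matrix.det_transpose] at hdet
  obtain ⟨v, hv0, hv⟩ := Matrix.exists_mulVec_eq_zero_iff.mpr hdet
  have hv' : Aᵀ *ᵥ v = v := by
    rw [Matrix.transpose_sub, Matrix.sub_mulVec] at hv
    simpa [sub_eq_zero] using hv
  have hB : Bᵀ *ᵥ v = 0 := by
    have h1 := congrArg (fun M => v ⬝ᵥ (M *ᵥ v)) hP
    simp only [Matrix.sub_mulVec, ← Matrix.mulVec_mulVec, hv', dotProduct_sub] at h1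
    rw [Matrix.dotProduct_mulVec, ← Matrix.mulVec_transpose, hv', sub_self,
      Matrix.dotProduct_mulVec, ← Matrix.mulVec_transpose] at h1
    exact dotProduct_self_eq_zero.mp h1.symm
  apply hv0
  refine reach_dual hreach (Submodule.span ℝ {v}) ?_ ?_ v (Submodule.mem_span_singleton_self v)
  · intro w hw
    obtain ⟨a, rfl⟩ := Submodule.mem_span_singleton.mp hw
    rw [Matrix.mulVec_smul, hv']; exact hw
  · intro w hw
    obtain ⟨a, rfl⟩ := Submodule.mem_span_singleton.mp hw
    rw [Matrix.mulVec_smul, hB, smul_zero]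

lemma reflect_identity {k : ℕ} (A D : Matrix (Fin k) (Fin k) ℝ) (h : A * D * Aᵀ = D) (N : ℕ)
    (p : Polynomial ℝ) (hp : p.natDegree ≤ N) :
    (Polynomial.aeval A p) * D * (Aᵀ ^ N) = D * Polynomial.aeval Aᵀ (p.reflect N) := by
  have hpow : ∀ j : ℕ, A ^ j * D * Aᵀ ^ j = D := by
    intro j
    induction j with
    | zero => simp
    | succ j ih =>
      calc A ^ (j+1) * D * Aᵀ ^ (j+1) = A ^ j * (A * D * Aᵀ) * Aᵀ ^ j := by
            rw [pow_succ, pow_succ']; simp only [Matrix.mul_assoc]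
        _ = D := by rw [h, ih]
  refine Polynomial.induction_with_natDegree_le
    (motive := fun p => (Polynomial.aeval A p) * D * (Aᵀ ^ N) = D * Polynomial.aeval Aᵀ (p.reflect N))
    N ?_ ?_ ?_ p hp
  · simp
  · intro j r _ hj
    rw [Polynomial.reflect_C_mul_X_pow, Polynomial.revAt_le hj]
    simp only [map_mul, Polynomial.aeval_C, map_pow, Polynomial.aeval_X, Algebra.algebraMap_eq_smul_one]
    have : Aᵀ ^ N = Aᵀ ^ j * Aᵀ ^ (N - j) := by rw [← pow_add]; congr 1; omega
    rw [this]
    simp only [Matrix.smul_mul, Matrix.mul_smul, Matrix.one_mul]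
    rw [← Matrix.mul_assoc, hpow]
  · intro f g _ _ hf hg
    rw [Polynomial.reflect_add, map_add, map_add, add_mul, add_mul, mul_add, hf, hg]

lemma reverse_unit {n : ℕ} (A : Matrix (Fin n) (Fin n) ℝ) (hA : Unmixed A) :
    IsUnit (Polynomial.aeval A A.charpoly.reverse) := by
  rcases n with _ | n
  · exact isUnit_of_subsingleton _
  have h1 : IsUnit (Polynomial.aeval (A.map (algebraMap ℝ ℂ)) A.charpoly.reverse) := by
    rw [← spectrum.zero_notMem_iff ℂ]
    intro h0
    rw [← Polynomial.aeval_map_algebraMap ℂ, 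
      spectrum.map_polynomial_aeval_of_nonempty _ _
        (spectrum.nonempty_of_isAlgClosed_of_finiteDimensional ℂ _)] at h0
    obtain ⟨mu, hmu, h0⟩ := h0
    have hmu0 : mu ≠ 0 := by
      rintro rfl
      simp [Polynomial.eval_map, (Matrix.charpoly_monic A).leadingCoeff] at h0
    simp only [Polynomial.eval_map] at h0
    let _ : Invertible mu⁻¹ := invertibleOfNonzero (inv_ne_zero hmu0)
    rw [← inv_inv mu, ← invOf_eq_inv mu⁻¹, Polynomial.eval₂_reverse_eq_zero_iff] at h0
    refine hA mu mu⁻¹ hmu ?_ (mul_inv_cancel₀ hmu0)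
    rw [Matrix.mem_spectrum_iff_isRoot_charpoly]
    have := Matrix.charpoly_map A (algebraMap ℝ ℂ)
    rw [this, Polynomial.IsRoot, Polynomial.eval_map]
    exact h0
  have h2 : Polynomial.aeval (A.map (algebraMap ℝ ℂ)) A.charpoly.reverse
      = (Polynomial.aeval A A.charpoly.reverse).map (algebraMap ℝ ℂ) := by
    have := Polynomial.aeval_algHom_apply ((Algebra.ofId ℝ ℂ).mapMatrix (m := Fin (n+1))) A A.charpoly.reverse
    exact this
  rw [h2, Matrix.isUnit_iff_isUnit_det] at h1
  rw [Matrix.isUnit_iff_isUnit_det, isUnit_iff_ne_zero]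
  intro h3
  have h4 := RingHom.map_det (algebraMap ℝ ℂ) (Polynomial.aeval A A.charpoly.reverse)
  rw [h3] at h4
  simp only [RingHom.mapMatrix_apply] at h4
  rw [← h4] at h1
  simp at h1

lemma aeval_intertwine {n k : ℕ} (A : Matrix (Fin n) (Fin n) ℝ) (A' : Matrix (Fin k) (Fin k) ℝ)
    (π : Matrix (Fin k) (Fin n) ℝ) (h : π * A = A' * π) (p : Polynomial ℝ) :
    π * Polynomial.aeval A p = Polynomial.aeval A' p * π := by
  induction p using Polynomial.induction_on' with
  | add p q hp hq => rw [map_add, map_add, Matrix.mul_add, Matrix.add_mul, hp, hq]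
  | monomial j a =>
    simp only [Polynomial.aeval_monomial, Algebra.algebraMap_eq_smul_one, Matrix.smul_mul, Matrix.mul_smul, Matrix.one_mul]
    congr 1
    induction j with
    | zero => simp
    | succ j ih => rw [pow_succ, pow_succ, ← Matrix.mul_assoc, ih, Matrix.mul_assoc, h, Matrix.mul_assoc]

lemma stein_unique {n k : ℕ} (A : Matrix (Fin n) (Fin n) ℝ) (A' D : Matrix (Fin k) (Fin k) ℝ)
    (π : Matrix (Fin k) (Fin n) ℝ) (σ : Matrix (Fin n) (Fin k) ℝ) (hs : π * σ = 1)
    (h : π * A = A' * π) (hA : Unmixed A) (hD : A' * D * A'ᵀ = D) : D = 0 := by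
  have h0 : Polynomial.aeval A' A.charpoly = 0 := by
    have := aeval_intertwine A A' π h A.charpoly
    rw [Matrix.aeval_self_charpoly, Matrix.mul_zero] at this
    have h2 := congrArg (fun M => M * σ) this
    simpa [Matrix.mul_assoc, hs] using h2.symm
  obtain ⟨u, hu⟩ := reverse_unit A hA
  have h1 : Polynomial.aeval A' A.charpoly.reverse * (π * (↑u⁻¹ : Matrix (Fin n) (Fin n) ℝ) * σ) = 1 := by
    have := aeval_intertwine A A' π h A.charpoly.reverse
    rw [← Matrix.mul_assoc, ← Matrix.mul_assoc, ← this, ← hu, Matrix.mul_assoc π, Units.mul_inv,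
      Matrix.mul_one, hs]
  have h3 := reflect_identity A' D hD A.charpoly.natDegree A.charpoly le_rfl
  rw [h0, Matrix.zero_mul, Matrix.zero_mul] at h3
  have h4 : Polynomial.aeval A'ᵀ (A.charpoly.reflect A.charpoly.natDegree)
      = (Polynomial.aeval A' A.charpoly.reverse)ᵀ := by
    have : ∀ p : Polynomial ℝ, Polynomial.aeval A'ᵀ p = (Polynomial.aeval A' p)ᵀ := by
      intro p
      induction p using Polynomial.induction_on' with
      | add p q hp hq => simp [hp, hq]
      | monomial j a => simp [Polynomial.aeval_monomial, Algebra.algebraMap_eq_smul_one, Matrix.transpose_pow]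
    exact this _
  rw [h4] at h3
  have h5 := congrArg (fun M => M * (π * (↑u⁻¹ : Matrix (Fin n) (Fin n) ℝ) * σ)ᵀ) h3
  simp only [Matrix.zero_mul] at h5
  have h1' := mul_eq_one_comm.mp h1
  rw [Matrix.mul_assoc, ← Matrix.transpose_mul, h1', Matrix.transpose_one, Matrix.mul_one] at h5
  exact h5.symm

lemma exists_symm {n : ℕ} {ι : Type*} (w v : ι → Fin n → ℝ)
    (hw : Submodule.span ℝ (Set.range w) = ⊤) (h : ∀ i j, w i ⬝ᵥ v j = v i ⬝ᵥ w j) :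
    ∃ P : Matrix (Fin n) (Fin n) ℝ, P.IsSymm ∧ ∀ i, P *ᵥ w i = v i := by
  have hsep : ∀ x : Fin n → ℝ, (∀ i, w i ⬝ᵥ x = 0) → x = 0 := by
    intro x hx
    have key : ∀ y ∈ Submodule.span ℝ (Set.range w), y ⬝ᵥ x = 0 := by
      intro y hy
      induction hy using Submodule.span_induction with
      | mem y hy => obtain ⟨i, rfl⟩ := hy; exact hx i
      | zero => simp
      | add a b _ _ ha hb => simp [ha, hb]
      | smul c a _ ha => simp [ha]
    exact dotProduct_self_eq_zero.mp (key x (by rw [hw]; trivial))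
  have hsurj : LinearMap.range (Finsupp.linearCombination ℝ w) = ⊤ := by
    rw [Finsupp.range_linearCombination, hw]
  obtain ⟨g, hg⟩ := LinearMap.exists_rightInverse_of_surjective _ hsurj
  have hadj : ∀ i (f : ι →₀ ℝ), w i ⬝ᵥ Finsupp.linearCombination ℝ v f
      = v i ⬝ᵥ Finsupp.linearCombination ℝ w f := by
    intro i f
    induction f using Finsupp.induction_linear with
    | zero => simp
    | add f g hf hg => simp only [map_add, dotProduct_add, hf, hg]
    | single j a => simp [h]
  let P' : (Fin n → ℝ) →ₗ[ℝ] (Fin n → ℝ) := (Finsupp.linearCombination ℝ v) ∘ₗ g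
  have hP' : ∀ i, P' (w i) = v i := by
    intro i
    rw [← sub_eq_zero]
    apply hsep
    intro j
    rw [dotProduct_sub]
    change w j ⬝ᵥ Finsupp.linearCombination ℝ v (g (w i)) - _ = 0
    rw [hadj, h, sub_eq_zero]
    congr 1
    exact LinearMap.congr_fun hg (w i)
  refine ⟨LinearMap.toMatrix' P', ?_, fun i => by rw [LinearMap.toMatrix'_mulVec, hP']⟩
  set P := LinearMap.toMatrix' P' with hPdef
  have hP : ∀ i, P *ᵥ w i = v i := fun i => by rw [LinearMap.toMatrix'_mulVec, hP']
  have h1 : ∀ i, (Pᵀ - P) *ᵥ w i = 0 := by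
    intro i
    apply hsep
    intro j
    rw [Matrix.sub_mulVec, dotProduct_sub, hP, Matrix.dotProduct_mulVec, ← Matrix.mulVec_transpose,
      Matrix.transpose_transpose, hP, h, sub_self]
  have h2 : ∀ y : Fin n → ℝ, (Pᵀ - P) *ᵥ y = 0 := by
    intro y
    have : y ∈ Submodule.span ℝ (Set.range w) := by rw [hw]; trivial
    induction this using Submodule.span_induction with
    | mem y hy => obtain ⟨i, rfl⟩ := hy; exact h1 i
    | zero => simp
    | add a b _ _ ha hb => rw [Matrix.mulVec_add, ha, hb, add_zero]
    | smul c a _ ha => rw [Matrix.mulVec_smul, ha, smul_zero]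
  have h3 : Pᵀ - P = 0 := by
    apply Matrix.ext_of_mulVec_single
    intro i
    rw [h2]; simp; rfl
  exact sub_eq_zero.mp h3

/-- The generic set of real points used in the construction of `P`. -/
def Good {n : ℕ} (A : Matrix (Fin n) (Fin n) ℝ) : Set ℝ :=
  {y | 1 < y ∧ IsUnit (y • (1 : Matrix (Fin n) (Fin n) ℝ) - A) ∧
    IsUnit (y⁻¹ • (1 : Matrix (Fin n) (Fin n) ℝ) - A)}

lemma eventually_good {n : ℕ} (A : Matrix (Fin n) (Fin n) ℝ) :
    ∀ᶠ y : ℝ in Filter.atTop, y ∈ Good A := by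
  have hfin : {y : ℝ | ¬ IsUnit (y • (1 : Matrix (Fin n) (Fin n) ℝ) - A)}.Finite := by
    refine (A.charpoly.roots.toFinset.finite_toSet).subset ?_
    intro y hy
    simp only [Finset.mem_coe, Multiset.mem_toFinset]
    rw [Polynomial.mem_roots (Matrix.charpoly_monic A).ne_zero, Polynomial.IsRoot,
      Matrix.eval_charpoly]
    by_contra h
    apply hy
    rw [Matrix.isUnit_iff_isUnit_det, isUnit_iff_ne_zero, Matrix.smul_one_eq_diagonal]
    exact h
  have hfin2 : {y : ℝ | ¬ IsUnit (y⁻¹ • (1 : Matrix (Fin n) (Fin n) ℝ) - A)}.Finite :=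
    hfin.preimage (f := fun y : ℝ => y⁻¹) inv_injective.injOn
  have e1 : ∀ᶠ y : ℝ in Filter.atTop, IsUnit (y • (1 : Matrix (Fin n) (Fin n) ℝ) - A) := by
    have := hfin.compl_mem_cofinite
    have := Filter.atTop_le_cofinite this
    filter_upwards [this] with y hy
    simpa using hy
  have e2 : ∀ᶠ y : ℝ in Filter.atTop, IsUnit (y⁻¹ • (1 : Matrix (Fin n) (Fin n) ℝ) - A) := by
    have := hfin2.compl_mem_cofinite
    have := Filter.atTop_le_cofinite this
    filter_upwards [this] with y hy
    simpa using hy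
  filter_upwards [Filter.eventually_gt_atTop 1, e1, e2] with y h1 h2 h3
  exact ⟨h1, h2, h3⟩

lemma limit_zero {n p q : ℕ} (A : Matrix (Fin n) (Fin n) ℝ) (M : Matrix (Fin p) (Fin n) ℝ)
    (N : Matrix (Fin n) (Fin q) ℝ) (E : Matrix (Fin p) (Fin q) ℝ)
    (h : ∀ y ∈ Good A, M * (y • (1 : Matrix (Fin n) (Fin n) ℝ) - A)⁻¹ * N = E) : E = 0 := by
  have h1 : ∀ᶠ y : ℝ in Filter.atTop,
      (1 - y⁻¹ • A).det • E = y⁻¹ • (M * (1 - y⁻¹ • A).adjugate * N) := by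
    filter_upwards [eventually_good A] with y hy
    have hy0 : y ≠ 0 := by have := hy.1; positivity
    have e : y • (1 : Matrix (Fin n) (Fin n) ℝ) - A = y • (1 - y⁻¹ • A) := by
      rw [smul_sub, smul_smul, mul_inv_cancel₀ hy0, one_smul]
    have hU : IsUnit (1 - y⁻¹ • A) := by
      have := hy.2.1
      rw [e] at this
      have h2 := this.smul (Units.mk0 y⁻¹ (inv_ne_zero hy0))
      rwa [Units.smul_mk0, smul_smul, inv_mul_cancel₀ hy0, one_smul] at h2
    have hdet := (Matrix.isUnit_iff_isUnit_det _).mp hU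
    have h2 : (y • (1 - y⁻¹ • A)) * (y⁻¹ • (1 - y⁻¹ • A)⁻¹) = 1 := by
      rw [Matrix.smul_mul, Matrix.mul_smul, smul_smul, mul_inv_cancel₀ hy0, one_smul,
        Matrix.mul_nonsing_inv _ hdet]
    rw [← h y hy, e, Matrix.inv_eq_right_inv h2, Matrix.inv_def]
    simp only [Matrix.smul_mul, Matrix.mul_smul, smul_smul]
    congr 1
    rw [mul_left_comm, Ring.mul_inverse_cancel _ hdet, mul_one]
  have c1 : Continuous (fun t : ℝ => (1 - t • A).det • E) := by
    have : Continuous (fun t : ℝ => (1 - t • A)) := by fun_prop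
    exact this.matrix_det.smul continuous_const
  have c2 : Continuous (fun t : ℝ => t • (M * (1 - t • A).adjugate * N)) := by
    have : Continuous (fun t : ℝ => (1 - t • A)) := by fun_prop
    exact continuous_id.smul ((continuous_const.matrix_mul this.matrix_adjugate).matrix_mul
      continuous_const)
  have t1 := (c1.tendsto 0).comp (tendsto_inv_atTop_zero (𝕜 := ℝ))
  have t2 := (c2.tendsto 0).comp (tendsto_inv_atTop_zero (𝕜 := ℝ))
  have := tendsto_nhds_unique_of_eventuallyEq t1 t2 h1
  simpa using this

lemma obs_zero {n m : ℕ} (A : Matrix (Fin n) (Fin n) ℝ) (C : Matrix (Fin m) (Fin n) ℝ)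
    (hobs : Observable A C) (v : Matrix (Fin n) (Fin 1) ℝ)
    (h : ∀ y ∈ Good A, C * (y • (1 : Matrix (Fin n) (Fin n) ℝ) - A)⁻¹ * v = 0) : v = 0 := by
  have step : ∀ v : Matrix (Fin n) (Fin 1) ℝ,
      (∀ y ∈ Good A, C * (y • (1 : Matrix (Fin n) (Fin n) ℝ) - A)⁻¹ * v = 0) →
      C * v = 0 ∧ ∀ y ∈ Good A, C * (y • (1 : Matrix (Fin n) (Fin n) ℝ) - A)⁻¹ * (A * v) = 0 := by
    intro v hv
    have h1 : ∀ y ∈ Good A, C * (y • (1 : Matrix (Fin n) (Fin n) ℝ) - A)⁻¹ * (A * v) = - (C * v) := by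
      intro y hy
      have hi := Matrix.nonsing_inv_mul _ ((Matrix.isUnit_iff_isUnit_det _).mp hy.2.1)
      have e : A * v = y • v - (y • (1 : Matrix (Fin n) (Fin n) ℝ) - A) * v := by
        rw [Matrix.sub_mul, Matrix.smul_mul, Matrix.one_mul]; abel
      rw [e, Matrix.mul_sub, Matrix.mul_smul, hv y hy, smul_zero, zero_sub, Matrix.mul_assoc,
        ← Matrix.mul_assoc _ _ v, hi, Matrix.one_mul]
    have h2 := limit_zero A C (A * v) _ h1
    refine ⟨neg_eq_zero.mp h2, fun y hy => by rw [h1 y hy, h2]⟩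
  have all : ∀ k : ℕ, C * A ^ k * v = 0 ∧
      ∀ y ∈ Good A, C * (y • (1 : Matrix (Fin n) (Fin n) ℝ) - A)⁻¹ * (A ^ k * v) = 0 := by
    intro k
    induction k with
    | zero => simpa using ⟨(step v h).1, h⟩
    | succ k ih =>
      have h1 := (step _ ih.2).2
      rw [← Matrix.mul_assoc, ← pow_succ'] at h1
      refine ⟨?_, h1⟩
      rw [Matrix.mul_assoc]
      exact (step _ h1).1
  have h0 := hobs (fun i => v i 0) (fun k _ => by
    ext i
    have := congrFun (congrFun (all k).1 i) 0
    exact this)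
  ext i j
  rw [Subsingleton.elim j 0]
  exact congrFun h0 i

lemma exists_P {n m : ℕ} (A : Matrix (Fin n) (Fin n) ℝ) (B : Matrix (Fin n) (Fin m) ℝ)
    (C : Matrix (Fin m) (Fin n) ℝ) (D : Matrix (Fin m) (Fin m) ℝ)
    (hobs : Observable A C) (hap : AllPass A B C D) :
    ∃ P : Matrix (Fin n) (Fin n) ℝ, P.IsSymm ∧ A * P * Aᵀ - P = B * Bᵀ := by
  let R : ℝ → Matrix (Fin n) (Fin n) ℝ := fun z => (z • (1 : Matrix (Fin n) (Fin n) ℝ) - A)⁻¹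
  let F : ℝ → Matrix (Fin m) (Fin m) ℝ := fun z => C * R z * B + D
  have hRt : ∀ z, (R z)ᵀ = (z • (1 : Matrix (Fin n) (Fin n) ℝ) - Aᵀ)⁻¹ := by
    intro z
    simp [R, Matrix.transpose_nonsing_inv]
  have hFt : ∀ z, (F z)ᵀ = Bᵀ * (R z)ᵀ * Cᵀ + Dᵀ := by
    intro z
    simp [F, Matrix.transpose_mul, Matrix.mul_assoc]
  have hF : ∀ y ∈ Good A, F y⁻¹ * (F y)ᵀ = 1 := by
    intro y hy
    have hy0 : y ≠ 0 := by have := hy.1; positivity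
    have := hap y⁻¹ (inv_ne_zero hy0) hy.2.2 (by
      rw [inv_inv]
      have := (Matrix.isUnit_transpose _).mpr hy.2.1
      simpa using this)
    rw [inv_inv] at this
    rw [hFt, hRt]
    exact this
  have hr1 : ∀ y ∈ Good A, (y • (1 : Matrix (Fin n) (Fin n) ℝ) - A) * R y = 1 := fun y hy =>
    Matrix.mul_nonsing_inv _ ((Matrix.isUnit_iff_isUnit_det _).mp hy.2.1)
  have hr2 : ∀ y ∈ Good A, R y * (y • (1 : Matrix (Fin n) (Fin n) ℝ) - A) = 1 := fun y hy =>
    Matrix.nonsing_inv_mul _ ((Matrix.isUnit_iff_isUnit_det _).mp hy.2.1)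
  have hr1' : ∀ y ∈ Good A, (y⁻¹ • (1 : Matrix (Fin n) (Fin n) ℝ) - A) * R y⁻¹ = 1 := fun y hy =>
    Matrix.mul_nonsing_inv _ ((Matrix.isUnit_iff_isUnit_det _).mp hy.2.2)
  let W : ℝ → Matrix (Fin n) (Fin m) ℝ := fun y => (R y)ᵀ * Cᵀ
  let V : ℝ → Matrix (Fin n) (Fin m) ℝ := fun y => (-y⁻¹) • (R y⁻¹ * B * (F y)ᵀ)
  have hWV : ∀ z ∈ Good A, ∀ y ∈ Good A, (z * y - 1) • ((W z)ᵀ * V y) = F z * (F y)ᵀ - 1 := by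
    intro z hz y hy
    have hy0 : y ≠ 0 := by have := hy.1; positivity
    have e : R z - R y⁻¹ = (y⁻¹ - z) • (R z * R y⁻¹) := by
      calc R z - R y⁻¹ = R z * ((y⁻¹ • (1 : Matrix (Fin n) (Fin n) ℝ) - A) * R y⁻¹)
            - (R z * (z • (1 : Matrix (Fin n) (Fin n) ℝ) - A)) * R y⁻¹ := by
            rw [hr1' y hy, hr2 z hz, Matrix.mul_one, Matrix.one_mul]
        _ = _ := by
            simp only [Matrix.mul_sub, Matrix.sub_mul, Matrix.mul_smul, Matrix.smul_mul,
              Matrix.mul_one, Matrix.one_mul, sub_smul, Matrix.mul_assoc]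
            abel
    have e2 : F z - F y⁻¹ = C * (R z - R y⁻¹) * B := by
      simp only [F, Matrix.mul_sub, Matrix.sub_mul]; abel
    rw [← hF y hy, ← Matrix.sub_mul, e2, e]
    simp only [W, V, Matrix.transpose_mul, Matrix.transpose_transpose, Matrix.mul_smul,
      Matrix.smul_mul, smul_smul, Matrix.mul_assoc]
    congr 1
    field_simp
    ring
  have hsym : ∀ z ∈ Good A, ∀ y ∈ Good A, (W z)ᵀ * V y = (V z)ᵀ * W y := by
    intro z hz y hy
    have hne : z * y - 1 ≠ 0 := by
      have h1 := hz.1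
      have h2 := hy.1
      nlinarith
    apply smul_right_injective _ hne
    change (z * y - 1) • _ = (z * y - 1) • _
    have h1 := congrArg Matrix.transpose (hWV y hy z hz)
    rw [Matrix.transpose_smul, Matrix.transpose_mul, Matrix.transpose_transpose, mul_comm y z] at h1
    rw [h1, hWV z hz y hy]
    simp [Matrix.transpose_mul]
  let w : Good A × Fin m → Fin n → ℝ := fun i k => W i.1 k i.2
  let v : Good A × Fin m → Fin n → ℝ := fun i k => V i.1 k i.2
  have hspan : Submodule.span ℝ (Set.range w) = ⊤ := by
    by_contra hne
    obtain ⟨f, hf0, hf⟩ := Submodule.exists_le_ker_of_lt_top _ (lt_top_iff_ne_top.mpr hne)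
    apply hf0
    let x : Matrix (Fin n) (Fin 1) ℝ := fun i _ => f (Pi.single i 1)
    have hfx : ∀ u, f u = ∑ i, u i * x i 0 := by
      intro u
      rw [LinearMap.pi_apply_eq_sum_univ f u]
      refine Finset.sum_congr rfl fun i _ => ?_
      rw [smul_eq_mul]
      congr 2
      ext j
      simp [Pi.single_apply, eq_comm]
    have hx : x = 0 := by
      apply obs_zero A C hobs
      intro y hy
      ext j l
      have h1 : f (w (⟨y, hy⟩, j)) = 0 := hf (Submodule.subset_span ⟨_, rfl⟩)
      rw [hfx] at h1
      rw [Subsingleton.elim l 0]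
      have h2 : C * (y • (1 : Matrix (Fin n) (Fin n) ℝ) - A)⁻¹ = (W y)ᵀ := by
        simp [W, R, Matrix.transpose_mul]
      rw [h2]
      exact h1
    ext i
    have := congrFun (congrFun hx i) 0
    simpa [x] using this
  obtain ⟨P, hPs, hP⟩ := exists_symm w v hspan (by
    rintro ⟨⟨z, hz⟩, a⟩ ⟨⟨y, hy⟩, b⟩
    exact congrFun (congrFun (hsym z hz y hy) a) b)
  have hPW : ∀ y ∈ Good A, P * W y = V y := by
    intro y hy
    ext i j
    exact congrFun (hP (⟨y, hy⟩, j)) i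
  refine ⟨P, hPs, ?_⟩
  have key : ∀ y ∈ Good A, (A * P * Aᵀ - P - B * Bᵀ) * W y = B * Dᵀ - A * (P * Cᵀ) := by
    intro y hy
    have hy0 : y ≠ 0 := by have := hy.1; positivity
    have h1 : Aᵀ * W y = y • W y - Cᵀ := by
      have := congrArg Matrix.transpose (hr2 y hy)
      rw [Matrix.transpose_mul, Matrix.transpose_sub, Matrix.transpose_smul, Matrix.transpose_one] at this
      have h2 := congrArg (fun M => M * Cᵀ) this
      simp only [Matrix.sub_mul, Matrix.smul_mul, Matrix.one_mul, Matrix.mul_assoc] at h2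
      simp only [W]
      rw [eq_sub_iff_add_eq, eq_comm, ← sub_eq_iff_eq_add']; exact h2
    have h2 : y • (A * V y) - V y = B * (F y)ᵀ := by
      have := congrArg (fun M => M * (B * (F y)ᵀ)) (hr1' y hy)
      simp only [Matrix.sub_mul, Matrix.smul_mul, Matrix.one_mul, Matrix.mul_assoc] at this
      rw [← this]
      simp only [V, Matrix.mul_smul, smul_smul, Matrix.mul_assoc]
      rw [show y * -y⁻¹ = -1 by field_simp, neg_smul, neg_smul, one_smul]
      abel
    have h3 : B * (F y)ᵀ = B * Bᵀ * W y + B * Dᵀ := by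
      rw [hFt, Matrix.mul_add]; simp only [W, Matrix.mul_assoc]
    calc (A * P * Aᵀ - P - B * Bᵀ) * W y
        = A * (P * (Aᵀ * W y)) - P * W y - B * Bᵀ * W y := by
          simp only [Matrix.sub_mul, Matrix.mul_assoc]
      _ = (y • (A * V y) - V y) - A * (P * Cᵀ) - B * Bᵀ * W y := by
          rw [h1, Matrix.mul_sub, Matrix.mul_smul, hPW y hy, Matrix.mul_sub, Matrix.mul_smul]
          abel
      _ = _ := by rw [h2, h3]; abel
  have hE : (B * Dᵀ - A * (P * Cᵀ))ᵀ = 0 := by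
    apply limit_zero A C (A * P * Aᵀ - P - B * Bᵀ)ᵀ
    intro y hy
    rw [← key y hy, Matrix.transpose_mul]
    simp only [W, Matrix.transpose_mul, Matrix.transpose_transpose, R]
  have hE' : B * Dᵀ - A * (P * Cᵀ) = 0 := by
    rw [← Matrix.transpose_transpose (B * Dᵀ - A * (P * Cᵀ)), hE, Matrix.transpose_zero]
  rw [hE'] at key
  have hz : ∀ u : Fin n → ℝ, (A * P * Aᵀ - P - B * Bᵀ) *ᵥ u = 0 := by
    intro y
    have : y ∈ Submodule.span ℝ (Set.range w) := by rw [hspan]; trivial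
    induction this using Submodule.span_induction with
    | mem y hy =>
      obtain ⟨⟨⟨y, hy⟩, j⟩, rfl⟩ := hy
      ext i
      exact congrFun (congrFun (key y hy) i) j
    | zero => simp
    | add a b _ _ ha hb => rw [Matrix.mulVec_add, ha, hb, add_zero]
    | smul c a _ ha => rw [Matrix.mulVec_smul, ha, smul_zero]
  have h3 : A * P * Aᵀ - P - B * Bᵀ = 0 := by
    apply Matrix.ext_of_mulVec_single
    intro i
    rw [hz]; simp; rfl
  exact sub_eq_zero.mp h3

/-- The constrained LMI matrix. -/
def NN {n m : ℕ} (A : Matrix (Fin n) (Fin n) ℝ) (B : Matrix (Fin n) (Fin m) ℝ)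
    (Q : Matrix (Fin n) (Fin n) ℝ) : Matrix (Fin n ⊕ Fin m) (Fin n ⊕ Fin m) ℝ :=
  Matrix.fromBlocks (Aᵀ * Q * A - Q) (Aᵀ * Q * B) (Bᵀ * Q * A) (Bᵀ * Q * B + 1)

lemma NN_eq {n m : ℕ} (A : Matrix (Fin n) (Fin n) ℝ) (B : Matrix (Fin n) (Fin m) ℝ)
    (Q : Matrix (Fin n) (Fin n) ℝ) :
    NN A B Q = (Matrix.fromCols A B)ᵀ * Q * Matrix.fromCols A B + Matrix.fromBlocks (-Q) 0 0 1 := by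
  rw [Matrix.transpose_fromCols, Matrix.fromRows_mul, Matrix.fromRows_mul_fromCols,
    Matrix.fromBlocks_add, NN]
  simp [sub_eq_add_neg]

lemma TNT {n m : ℕ} (A R : Matrix (Fin n) (Fin n) ℝ) (B : Matrix (Fin n) (Fin m) ℝ)
    (Q : Matrix (Fin n) (Fin n) ℝ) (hR : (A - 1) * R = 1) :
    (Matrix.fromBlocks R (-(R * B)) (0 : Matrix (Fin m) (Fin n) ℝ) (1 : Matrix (Fin m) (Fin m) ℝ))ᵀ * NN A B Q * Matrix.fromBlocks R (-(R * B)) (0 : Matrix (Fin m) (Fin n) ℝ) (1 : Matrix (Fin m) (Fin m) ℝ)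
      = Matrix.fromBlocks (Q + Rᵀ * Q + Q * R) (-(Q * (R * B))) (-((R * B)ᵀ * Q))
        (1 : Matrix (Fin m) (Fin m) ℝ) := by
  have hAR : A * R = R + 1 := by
    rw [Matrix.sub_mul, Matrix.one_mul, sub_eq_iff_eq_add] at hR
    rw [hR, add_comm]
  have hK : Matrix.fromCols A B * Matrix.fromBlocks R (-(R * B)) (0 : Matrix (Fin m) (Fin n) ℝ) (1 : Matrix (Fin m) (Fin m) ℝ)
      = Matrix.fromCols (R + 1) (-(R * B)) := by
    rw [Matrix.fromCols_mul_fromBlocks]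
    congr 1
    · rw [hAR]; simp
    · rw [Matrix.mul_neg, ← Matrix.mul_assoc, hAR, Matrix.add_mul]; simp
  set T := Matrix.fromBlocks R (-(R * B)) (0 : Matrix (Fin m) (Fin n) ℝ) (1 : Matrix (Fin m) (Fin m) ℝ) with hT
  have h1 : Tᵀ * NN A B Q * T = (Matrix.fromCols A B * T)ᵀ * Q * (Matrix.fromCols A B * T)
      + Tᵀ * Matrix.fromBlocks (-Q) 0 0 1 * T := by
    rw [NN_eq, Matrix.mul_add, Matrix.add_mul, Matrix.transpose_mul]
    simp only [Matrix.mul_assoc]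
  rw [h1, hK, hT, Matrix.fromBlocks_transpose, Matrix.transpose_fromCols, Matrix.fromRows_mul,
    Matrix.fromRows_mul_fromCols, Matrix.fromBlocks_multiply, Matrix.fromBlocks_multiply,
    Matrix.fromBlocks_add]
  congr 1
  · simp [Matrix.add_mul, Matrix.mul_add, Matrix.mul_assoc]; abel
  · simp [Matrix.add_mul, Matrix.mul_add, Matrix.mul_assoc]
  · simp [Matrix.add_mul, Matrix.mul_add, Matrix.mul_assoc]
  · simp [Matrix.add_mul, Matrix.mul_add, Matrix.mul_assoc]

lemma TT' {n m : ℕ} (A R : Matrix (Fin n) (Fin n) ℝ) (B : Matrix (Fin n) (Fin m) ℝ)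
    (hR : (A - 1) * R = 1) :
    Matrix.fromBlocks R (-(R * B)) (0 : Matrix (Fin m) (Fin n) ℝ) (1 : Matrix (Fin m) (Fin m) ℝ) *
      Matrix.fromBlocks (A - 1) B (0 : Matrix (Fin m) (Fin n) ℝ) (1 : Matrix (Fin m) (Fin m) ℝ) = 1 := by
  have hR' := mul_eq_one_comm.mp hR
  rw [Matrix.fromBlocks_multiply, hR']
  simp

lemma clmi_of_eq {n m : ℕ} (A R : Matrix (Fin n) (Fin n) ℝ) (B : Matrix (Fin n) (Fin m) ℝ)
    (Q : Matrix (Fin n) (Fin n) ℝ) (hR : (A - 1) * R = 1) (hQ : Q.IsSymm)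
    (hE : Q + Rᵀ * Q + Q * R = Q * (R * B) * (R * B)ᵀ * Q) :
    (NN A B Q).PosSemidef ∧ (NN A B Q).rank = m := by
  have h1 := TNT A R B Q hR
  have h2 := TT' A R B hR
  set T := Matrix.fromBlocks R (-(R * B)) (0 : Matrix (Fin m) (Fin n) ℝ) (1 : Matrix (Fin m) (Fin m) ℝ) with hT
  set T' := Matrix.fromBlocks (A - 1) B (0 : Matrix (Fin m) (Fin n) ℝ) (1 : Matrix (Fin m) (Fin m) ℝ) with hT'
  let H := Matrix.fromCols (-((R * B)ᵀ * Q)) (1 : Matrix (Fin m) (Fin m) ℝ)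
  have hH : Tᵀ * NN A B Q * T = Hᵀ * H := by
    rw [h1, Matrix.transpose_fromCols, Matrix.fromRows_mul_fromCols, hE]
    have hQ' : Qᵀ = Q := hQ
    congr 1
    · simp only [Matrix.transpose_neg, Matrix.transpose_mul, hQ', Matrix.transpose_transpose,
        Matrix.neg_mul, Matrix.mul_neg, neg_neg, Matrix.mul_assoc]
    · simp only [Matrix.transpose_neg, Matrix.transpose_mul, hQ', Matrix.transpose_transpose,
        Matrix.mul_one]
    · simp
    · simp
  have hN : NN A B Q = (H * T')ᵀ * (H * T') := by
    have h3 : T'ᵀ * Tᵀ = 1 := by rw [← Matrix.transpose_mul, h2, Matrix.transpose_one]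
    calc NN A B Q = (T'ᵀ * Tᵀ) * NN A B Q * (T * T') := by rw [h2, h3, Matrix.one_mul, Matrix.mul_one]
      _ = T'ᵀ * (Tᵀ * NN A B Q * T) * T' := by simp only [Matrix.mul_assoc]
      _ = _ := by rw [hH, Matrix.transpose_mul]; simp only [Matrix.mul_assoc]
  constructor
  · rw [hN]
    have := Matrix.posSemidef_conjTranspose_mul_self (H * T')
    rwa [Matrix.conjTranspose_eq_transpose_of_trivial] at this
  · rw [hN, Matrix.rank_transpose_mul_self]
    apply le_antisymm
    · simpa using (H * T').rank_le_card_height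
    · have h4 : (H * T') * (T * Matrix.fromRows (0 : Matrix (Fin n) (Fin m) ℝ) (1 : Matrix (Fin m) (Fin m) ℝ)) = 1 := by
        have h5 := mul_eq_one_comm.mp h2
        rw [Matrix.mul_assoc, ← Matrix.mul_assoc T', h5, Matrix.one_mul, Matrix.fromCols_mul_fromRows]
        simp
      have h6 := Matrix.rank_mul_le_left (H * T') (T * Matrix.fromRows (0 : Matrix (Fin n) (Fin m) ℝ) (1 : Matrix (Fin m) (Fin m) ℝ))
      rw [h4, Matrix.rank_one] at h6
      simpa using h6

lemma eq_of_clmi {n m : ℕ} (A R : Matrix (Fin n) (Fin n) ℝ) (B : Matrix (Fin n) (Fin m) ℝ)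
    (Q : Matrix (Fin n) (Fin n) ℝ) (hR : (A - 1) * R = 1)
    (hr : (NN A B Q).rank = m) :
    Q + Rᵀ * Q + Q * R = Q * (R * B) * (R * B)ᵀ * Q := by
  have h1 := TNT A R B Q hR
  set T := Matrix.fromBlocks R (-(R * B)) (0 : Matrix (Fin m) (Fin n) ℝ) (1 : Matrix (Fin m) (Fin m) ℝ) with hT
  set S := Q + Rᵀ * Q + Q * R with hS
  let N' := Matrix.fromBlocks S (-(Q * (R * B))) (-((R * B)ᵀ * Q)) (1 : Matrix (Fin m) (Fin m) ℝ)
  have hrank : N'.rank ≤ m := by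
    calc N'.rank = (Tᵀ * NN A B Q * T).rank := by rw [h1]
      _ ≤ (Tᵀ * NN A B Q).rank := Matrix.rank_mul_le_left _ _
      _ ≤ (NN A B Q).rank := Matrix.rank_mul_le_right _ _
      _ = m := hr
  -- the range of `N'` equals the range of its second block column
  let J : Matrix (Fin n ⊕ Fin m) (Fin m) ℝ := Matrix.fromRows (-(Q * (R * B))) 1
  have hJ : N' * Matrix.fromRows (0 : Matrix (Fin n) (Fin m) ℝ) (1 : Matrix (Fin m) (Fin m) ℝ) = J := by
    simp [N', J, Matrix.fromBlocks_mul_fromRows]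
  have hJrank : m ≤ J.rank := by
    have h4 : Matrix.fromCols (0 : Matrix (Fin m) (Fin n) ℝ) (1 : Matrix (Fin m) (Fin m) ℝ) * J = 1 := by
      simp [J, Matrix.fromCols_mul_fromRows]
    have := Matrix.rank_mul_le_right (Matrix.fromCols (0 : Matrix (Fin m) (Fin n) ℝ) (1 : Matrix (Fin m) (Fin m) ℝ)) J
    rw [h4, Matrix.rank_one] at this
    simpa using this
  have hle : LinearMap.range J.mulVecLin ≤ LinearMap.range N'.mulVecLin := by
    rw [← hJ, Matrix.mulVecLin_mul]
    exact LinearMap.range_comp_le_range _ _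
  have heq : LinearMap.range J.mulVecLin = LinearMap.range N'.mulVecLin :=
    Submodule.eq_of_le_of_finrank_le hle (hrank.trans hJrank)
  apply Matrix.ext_of_mulVec_single
  intro i
  set x : Fin n → ℝ := Pi.single i 1
  have hx : N' *ᵥ (Sum.elim x 0) ∈ LinearMap.range J.mulVecLin := by
    rw [heq]; exact ⟨_, rfl⟩
  obtain ⟨u, hu⟩ := hx
  rw [Matrix.mulVecLin_apply, Matrix.fromRows_mulVec, Matrix.fromBlocks_mulVec] at hu
  have hu1 : (-(Q * (R * B))) *ᵥ u = S *ᵥ x := by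
    ext j; have := congrFun hu (Sum.inl j); simpa using this
  have hu2 : u = (-((R * B)ᵀ * Q)) *ᵥ x := by
    ext j; have := congrFun hu (Sum.inr j); simpa using this
  rw [← hu1, hu2, Matrix.mulVec_mulVec, Matrix.neg_mul, Matrix.mul_neg, neg_neg]
  simp only [Matrix.mul_assoc]

lemma exists_proj {n : ℕ} (X : Submodule ℝ (Fin n → ℝ)) :
    ∃ (k : ℕ) (π : Matrix (Fin k) (Fin n) ℝ) (σ : Matrix (Fin n) (Fin k) ℝ),
      π * σ = 1 ∧ ∀ v, v ∈ X ↔ π *ᵥ v = 0 := by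
  let b := Module.finBasis ℝ ((Fin n → ℝ) ⧸ X)
  let f : (Fin n → ℝ) →ₗ[ℝ] (Fin (Module.finrank ℝ ((Fin n → ℝ) ⧸ X)) → ℝ) :=
    b.equivFun.toLinearMap ∘ₗ X.mkQ
  have hf : Function.Surjective f := b.equivFun.surjective.comp X.mkQ_surjective
  obtain ⟨g, hg⟩ := LinearMap.exists_rightInverse_of_surjective f (LinearMap.range_eq_top.mpr hf)
  refine ⟨_, LinearMap.toMatrix' f, LinearMap.toMatrix' g, ?_, ?_⟩
  · rw [← LinearMap.toMatrix'_comp, hg, LinearMap.toMatrix'_id]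
  · intro v
    rw [LinearMap.toMatrix'_mulVec]
    simp [f]

lemma intertwine {n k : ℕ} {X : Submodule ℝ (Fin n → ℝ)} {π : Matrix (Fin k) (Fin n) ℝ}
    {σ : Matrix (Fin n) (Fin k) ℝ} (hs : π * σ = 1) (hX : ∀ v, v ∈ X ↔ π *ᵥ v = 0)
    {p : ℕ} (M : Matrix (Fin p) (Fin n) ℝ) (hM : ∀ v ∈ X, M *ᵥ v = 0) :
    M = M * σ * π := by
  apply Matrix.ext_of_mulVec_single
  intro i
  set x : Fin n → ℝ := Pi.single i 1
  have h1 : x - (σ * π) *ᵥ x ∈ X := by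
    rw [hX, Matrix.mulVec_sub, Matrix.mulVec_mulVec, ← Matrix.mul_assoc, hs, Matrix.one_mul, sub_self]
  have h2 := hM _ h1
  rw [Matrix.mulVec_sub, sub_eq_zero, Matrix.mulVec_mulVec, ← Matrix.mul_assoc] at h2
  exact h2

lemma shift_invariant {n : ℕ} (A : Matrix (Fin n) (Fin n) ℝ) (X : Submodule ℝ (Fin n → ℝ))
    (hX : ∀ v ∈ X, A *ᵥ v ∈ X) : ∀ v ∈ X, (A - 1) *ᵥ v ∈ X := by
  intro v hv
  rw [Matrix.sub_mulVec, Matrix.one_mulVec]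
  exact X.sub_mem (hX v hv) hv

lemma unshift_invariant {n : ℕ} (A : Matrix (Fin n) (Fin n) ℝ) (X : Submodule ℝ (Fin n → ℝ))
    (hX : ∀ v ∈ X, (A - 1) *ᵥ v ∈ X) : ∀ v ∈ X, A *ᵥ v ∈ X := by
  intro v hv
  have := X.add_mem (hX v hv) hv
  rwa [Matrix.sub_mulVec, Matrix.one_mulVec, sub_add_cancel] at this

lemma cayley_eq {n m : ℕ} (A R P : Matrix (Fin n) (Fin n) ℝ) (B : Matrix (Fin n) (Fin m) ℝ)
    (hR : (A - 1) * R = 1) (hP : A * P * Aᵀ - P = B * Bᵀ) :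
    P + R * P + P * Rᵀ = R * B * (R * B)ᵀ := by
  have hR' := mul_eq_one_comm.mp hR
  have hRA : R * A = R + 1 := by
    rw [Matrix.mul_sub, Matrix.mul_one, sub_eq_iff_eq_add] at hR'
    rw [hR', add_comm]
  have hRA' : Aᵀ * Rᵀ = Rᵀ + 1 := by
    rw [← Matrix.transpose_mul, hRA]; simp
  calc P + R * P + P * Rᵀ = (R + 1) * P * (Rᵀ + 1) - R * P * Rᵀ := by noncomm_ring
    _ = (R * A) * P * (Aᵀ * Rᵀ) - R * P * Rᵀ := by rw [hRA, hRA']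
    _ = R * (A * P * Aᵀ - P) * Rᵀ := by
        simp only [Matrix.mul_sub, Matrix.sub_mul, Matrix.mul_assoc]
    _ = _ := by rw [hP, Matrix.transpose_mul]; simp only [Matrix.mul_assoc]

lemma quotient_unit {n m k : ℕ} {A R : Matrix (Fin n) (Fin n) ℝ} {B : Matrix (Fin n) (Fin m) ℝ}
    (hreach : Reachable A B) (hR : (A - 1) * R = 1)
    (π : Matrix (Fin k) (Fin n) ℝ) (σ : Matrix (Fin n) (Fin k) ℝ) (hs : π * σ = 1)
    (R' P' : Matrix (Fin k) (Fin k) ℝ) (hR' : π * R = R' * π) (hPs : P'.IsSymm)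
    (hP' : P' + R' * P' + P' * R'ᵀ = π * (R * B) * (π * (R * B))ᵀ) : IsUnit P' := by
  rw [Matrix.isUnit_iff_isUnit_det, isUnit_iff_ne_zero]
  intro hdet
  obtain ⟨v, hv0, hv⟩ := Matrix.exists_mulVec_eq_zero_iff.mpr hdet
  have hRt : πᵀ * R'ᵀ = Rᵀ * πᵀ := by rw [← Matrix.transpose_mul, ← hR', Matrix.transpose_mul]
  set G' := π * (R * B) with hG'
  have hker : ∀ v, P' *ᵥ v = 0 → G'ᵀ *ᵥ v = 0 ∧ P' *ᵥ (R'ᵀ *ᵥ v) = 0 := by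
    intro v hv
    have hv2 : v ᵥ* P' = 0 := by rw [← Matrix.mulVec_transpose, hPs, hv]
    clear_value G'
    have h1 := congrArg (fun M => M *ᵥ v) hP'
    simp only [Matrix.add_mulVec, ← Matrix.mulVec_mulVec, hv, Matrix.mulVec_zero, zero_add] at h1
    have h2 : v ⬝ᵥ (P' *ᵥ (R'ᵀ *ᵥ v)) = v ⬝ᵥ (G' *ᵥ (G'ᵀ *ᵥ v)) := by rw [h1]
    rw [Matrix.dotProduct_mulVec, hv2, zero_dotProduct, Matrix.dotProduct_mulVec,
      ← Matrix.mulVec_transpose] at h2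
    have h3 : G'ᵀ *ᵥ v = 0 := dotProduct_self_eq_zero.mp h2.symm
    refine ⟨h3, ?_⟩
    rw [h1, h3, Matrix.mulVec_zero]
  let U : Submodule ℝ (Fin n → ℝ) := (LinearMap.ker P'.mulVecLin).map πᵀ.mulVecLin
  have hU1 : ∀ u ∈ U, Rᵀ *ᵥ u ∈ U := by
    rintro _ ⟨x, hx, rfl⟩
    refine ⟨R'ᵀ *ᵥ x, (hker x hx).2, ?_⟩
    simp only [Matrix.mulVecLin_apply, Matrix.mulVec_mulVec, hRt]
  have hRM : Rᵀ * (A - 1)ᵀ = 1 := by rw [← Matrix.transpose_mul, hR, Matrix.transpose_one]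
  have hU2 := inv_invariant (A - 1)ᵀ Rᵀ hRM U hU1
  have hU3 : ∀ u ∈ U, Aᵀ *ᵥ u ∈ U := by
    apply unshift_invariant
    simpa using hU2
  have hU4 : ∀ u ∈ U, (R * B)ᵀ *ᵥ u = 0 := by
    rintro _ ⟨x, hx, rfl⟩
    have := (hker x hx).1
    rw [hG', Matrix.transpose_mul] at this
    simpa only [Matrix.mulVecLin_apply, Matrix.mulVec_mulVec] using this
  have hU5 : ∀ u ∈ U, Bᵀ *ᵥ u = 0 := by
    intro u hu
    have h1 := hU4 _ (hU2 u hu)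
    rw [Matrix.mulVec_mulVec, ← Matrix.transpose_mul, ← Matrix.mul_assoc, hR, Matrix.one_mul] at h1
    exact h1
  have h6 : πᵀ *ᵥ v = 0 := reach_dual hreach U hU3 hU5 _ ⟨v, hv, rfl⟩
  apply hv0
  have h7 := congrArg (fun x => σᵀ *ᵥ x) h6
  simpa [Matrix.mulVec_mulVec, ← Matrix.transpose_mul, hs] using h7

lemma existence {n m : ℕ} {A R P : Matrix (Fin n) (Fin n) ℝ} {B : Matrix (Fin n) (Fin m) ℝ}
    (hreach : Reachable A B) (hR : (A - 1) * R = 1) (hPs : P.IsSymm)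
    (hP : A * P * Aᵀ - P = B * Bᵀ)
    (X : Submodule ℝ (Fin n → ℝ)) (hX : ∀ v ∈ X, A *ᵥ v ∈ X) :
    ∃ Q : Matrix (Fin n) (Fin n) ℝ, Q.IsSymm ∧ (NN A B Q).PosSemidef ∧ (NN A B Q).rank = m ∧
      LinearMap.ker Q.mulVecLin = X := by
  obtain ⟨k, π, σ, hs, hker⟩ := exists_proj X
  have hXR := inv_invariant R (A - 1) hR X (shift_invariant A X hX)
  have hR' : π * R = (π * R * σ) * π := intertwine hs hker (π * R) (fun v hv => by
    rw [← Matrix.mulVec_mulVec]; exact (hker _).mp (hXR v hv))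
  set R' := π * R * σ
  set P' := π * P * πᵀ with hP'def
  have hPs' : P'.IsSymm := by
    rw [Matrix.IsSymm, hP'def, Matrix.transpose_mul, Matrix.transpose_mul, hPs,
      Matrix.transpose_transpose, Matrix.mul_assoc]
  have hRt : πᵀ * R'ᵀ = Rᵀ * πᵀ := by rw [← Matrix.transpose_mul, ← hR', Matrix.transpose_mul]
  have hP' : P' + R' * P' + P' * R'ᵀ = π * (R * B) * (π * (R * B))ᵀ := by
    have h1 := congrArg (fun M => π * M * πᵀ) (cayley_eq A R P B hR hP)
    simp only [Matrix.mul_add, Matrix.add_mul] at h1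
    rw [Matrix.transpose_mul π]
    have e1 : R' * P' = π * (R * P) * πᵀ := by
      rw [hP'def, ← Matrix.mul_assoc, ← Matrix.mul_assoc, ← hR']; simp only [Matrix.mul_assoc]
    have e2 : P' * R'ᵀ = π * (P * Rᵀ) * πᵀ := by
      rw [hP'def, Matrix.mul_assoc (π * P), hRt]; simp only [Matrix.mul_assoc]
    rw [e1, e2, hP'def, h1]; simp only [Matrix.mul_assoc]
  have hU := quotient_unit hreach hR π σ hs R' P' hR' hPs' hP'
  obtain ⟨u, hu⟩ := hU
  set Q' : Matrix (Fin k) (Fin k) ℝ := ↑u⁻¹ with hQ'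
  have hPQ : P' * Q' = 1 := by rw [← hu, hQ', Units.mul_inv]
  have hQP : Q' * P' = 1 := by rw [← hu, hQ', Units.inv_mul]
  have hQs : Q'ᵀ = Q' := by
    have h1 : P' * Q'ᵀ = 1 := by
      have := congrArg Matrix.transpose hQP
      rwa [Matrix.transpose_mul, hPs', Matrix.transpose_one] at this
    calc Q'ᵀ = Q' * P' * Q'ᵀ := by rw [hQP, Matrix.one_mul]
      _ = Q' := by rw [Matrix.mul_assoc, h1, Matrix.mul_one]
  have hE' : Q' + R'ᵀ * Q' + Q' * R' = Q' * (π * (R * B) * (π * (R * B))ᵀ) * Q' := by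
    rw [← hP', Matrix.mul_add, Matrix.mul_add, Matrix.add_mul, Matrix.add_mul, hQP, Matrix.one_mul,
      ← Matrix.mul_assoc Q' P', hQP, Matrix.one_mul, Matrix.mul_assoc Q' (R' * P') Q',
      Matrix.mul_assoc R', hPQ, Matrix.mul_one]
    abel
  refine ⟨πᵀ * Q' * π, ?_, ?_⟩
  · rw [Matrix.IsSymm, Matrix.transpose_mul, Matrix.transpose_mul, hQs,
      Matrix.transpose_transpose, Matrix.mul_assoc]
  have hsym : (πᵀ * Q' * π).IsSymm := by
    rw [Matrix.IsSymm, Matrix.transpose_mul, Matrix.transpose_mul, hQs,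
      Matrix.transpose_transpose, Matrix.mul_assoc]
  rw [← and_assoc]
  refine ⟨clmi_of_eq A R B _ hR hsym ?_, ?_⟩
  · have e1 : Rᵀ * (πᵀ * Q' * π) = πᵀ * (R'ᵀ * Q') * π := by
      rw [← Matrix.mul_assoc, ← Matrix.mul_assoc, ← hRt]; simp only [Matrix.mul_assoc]
    have e2 : πᵀ * Q' * π * R = πᵀ * (Q' * R') * π := by
      rw [Matrix.mul_assoc (πᵀ * Q'), hR']; simp only [Matrix.mul_assoc]
    rw [e1, e2, ← Matrix.add_mul, ← Matrix.mul_add, ← Matrix.add_mul, ← Matrix.mul_add, hE',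
      Matrix.transpose_mul π]
    simp only [Matrix.mul_assoc]
  · ext v
    rw [LinearMap.mem_ker, Matrix.mulVecLin_apply, hker]
    constructor
    · intro h
      have h1 := congrArg (fun x => (P' * σᵀ) *ᵥ x) h
      simp only [Matrix.mulVec_mulVec, Matrix.mulVec_zero] at h1
      have e : P' * σᵀ * (πᵀ * Q' * π) = π := by
        calc P' * σᵀ * (πᵀ * Q' * π) = P' * (σᵀ * πᵀ) * Q' * π := by simp only [Matrix.mul_assoc]
          _ = π := by rw [← Matrix.transpose_mul, hs, Matrix.transpose_one, Matrix.mul_one, hPQ,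
                        Matrix.one_mul]
      rwa [e] at h1
    · intro h
      rw [← Matrix.mulVec_mulVec, h, Matrix.mulVec_zero]

lemma ker_invariant {n m : ℕ} {A R Q : Matrix (Fin n) (Fin n) ℝ} {B : Matrix (Fin n) (Fin m) ℝ}
    (hR : (A - 1) * R = 1)
    (hE : Q + Rᵀ * Q + Q * R = Q * (R * B) * (R * B)ᵀ * Q) :
    ∀ v ∈ LinearMap.ker Q.mulVecLin, A *ᵥ v ∈ LinearMap.ker Q.mulVecLin := by
  apply unshift_invariant
  apply inv_invariant (A - 1) R (mul_eq_one_comm.mp hR)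
  intro v hv
  rw [LinearMap.mem_ker, Matrix.mulVecLin_apply] at hv ⊢
  have h1 := congrArg (fun M => M *ᵥ v) hE
  simpa only [Matrix.add_mulVec, ← Matrix.mulVec_mulVec, hv, Matrix.mulVec_zero, zero_add] using h1

/-- The inverse of the compression of a solution solves a Stein equation. -/
lemma compress {n m k : ℕ} {R Q : Matrix (Fin n) (Fin n) ℝ} {B : Matrix (Fin n) (Fin m) ℝ}
    (π : Matrix (Fin k) (Fin n) ℝ) (σ : Matrix (Fin n) (Fin k) ℝ) (hs : π * σ = 1)
    (X : Submodule ℝ (Fin n → ℝ)) (hker : ∀ v, v ∈ X ↔ π *ᵥ v = 0)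
    (R' : Matrix (Fin k) (Fin k) ℝ) (hR' : π * R = R' * π)
    (hQs : Q.IsSymm) (hQX : LinearMap.ker Q.mulVecLin = X)
    (hE : Q + Rᵀ * Q + Q * R = Q * (R * B) * (R * B)ᵀ * Q) :
    ∃ P' Q' : Matrix (Fin k) (Fin k) ℝ, P' * Q' = 1 ∧ Q = πᵀ * Q' * π ∧
      P' + R' * P' + P' * R'ᵀ = π * (R * B) * (π * (R * B))ᵀ := by
  have h1 : Q = Q * σ * π := intertwine hs hker Q (fun v hv => by rw [← hQX] at hv; exact hv)
  have h2 : Q = πᵀ * (σᵀ * Q * σ) * π := by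
    have h3 := congrArg Matrix.transpose h1
    rw [hQs, Matrix.transpose_mul, Matrix.transpose_mul, hQs] at h3
    calc Q = Q * σ * π := h1
      _ = (πᵀ * (σᵀ * Q)) * σ * π := by rw [← h3]
      _ = _ := by simp only [Matrix.mul_assoc]
  set Q' := σᵀ * Q * σ with hQ'
  have hst : σᵀ * πᵀ = 1 := by rw [← Matrix.transpose_mul, hs, Matrix.transpose_one]
  have hU : IsUnit Q' := by
    rw [Matrix.isUnit_iff_isUnit_det, isUnit_iff_ne_zero]
    intro hdet
    obtain ⟨v, hv0, hv⟩ := Matrix.exists_mulVec_eq_zero_iff.mpr hdet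
    apply hv0
    have h4 : Q *ᵥ (σ *ᵥ v) = 0 := by
      rw [h2, Matrix.mulVec_mulVec, Matrix.mul_assoc _ π σ, hs, Matrix.mul_one, ← Matrix.mulVec_mulVec,
        hv, Matrix.mulVec_zero]
    have h5 : σ *ᵥ v ∈ X := by rw [← hQX]; exact h4
    rw [hker, Matrix.mulVec_mulVec, hs, Matrix.one_mulVec] at h5
    exact h5
  have hRt : πᵀ * R'ᵀ = Rᵀ * πᵀ := by rw [← Matrix.transpose_mul, ← hR', Matrix.transpose_mul]
  have hE' : Q' + R'ᵀ * Q' + Q' * R' = Q' * (π * (R * B) * (π * (R * B))ᵀ) * Q' := by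
    have h6 := congrArg (fun M => σᵀ * M * σ) hE
    simp only [Matrix.mul_add, Matrix.add_mul] at h6
    have e1 : σᵀ * (Rᵀ * Q) * σ = R'ᵀ * Q' := by
      calc σᵀ * (Rᵀ * Q) * σ = σᵀ * (Rᵀ * (πᵀ * Q' * π)) * σ := by rw [← h2]
        _ = σᵀ * (Rᵀ * πᵀ) * Q' * (π * σ) := by simp only [Matrix.mul_assoc]
        _ = (σᵀ * πᵀ) * R'ᵀ * Q' * (π * σ) := by rw [← hRt]; simp only [Matrix.mul_assoc]
        _ = _ := by rw [hst, hs, Matrix.one_mul, Matrix.mul_one]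
    have e2 : σᵀ * (Q * R) * σ = Q' * R' := by
      calc σᵀ * (Q * R) * σ = σᵀ * ((πᵀ * Q' * π) * R) * σ := by rw [← h2]
        _ = (σᵀ * πᵀ) * Q' * (π * R) * σ := by simp only [Matrix.mul_assoc]
        _ = (σᵀ * πᵀ) * Q' * R' * (π * σ) := by rw [hR']; simp only [Matrix.mul_assoc]
        _ = _ := by rw [hst, hs, Matrix.one_mul, Matrix.mul_one]
    have e3 : σᵀ * (Q * (R * B) * (R * B)ᵀ * Q) * σ
        = Q' * (π * (R * B) * (π * (R * B))ᵀ) * Q' := by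
      calc σᵀ * (Q * (R * B) * (R * B)ᵀ * Q) * σ
          = σᵀ * ((πᵀ * Q' * π) * (R * B) * (R * B)ᵀ * (πᵀ * Q' * π)) * σ := by rw [← h2]
        _ = (σᵀ * πᵀ) * Q' * (π * (R * B)) * ((R * B)ᵀ * πᵀ) * Q' * (π * σ) := by
            simp only [Matrix.mul_assoc]
        _ = _ := by
            rw [hst, hs, Matrix.one_mul, Matrix.mul_one, ← Matrix.transpose_mul]
            simp only [Matrix.mul_assoc]
    rw [e1, e2, e3] at h6
    exact h6
  obtain ⟨u, hu⟩ := hU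
  set P' : Matrix (Fin k) (Fin k) ℝ := ↑u⁻¹ with hP'
  have hQP : Q' * P' = 1 := by rw [← hu, hP', Units.mul_inv]
  have hPQ : P' * Q' = 1 := by rw [← hu, hP', Units.inv_mul]
  refine ⟨P', Q', hPQ, h2, ?_⟩
  have h7 := congrArg (fun M => P' * M * P') hE'
  calc P' + R' * P' + P' * R'ᵀ
      = (P' * Q') * P' + P' * R'ᵀ * (Q' * P') + (P' * Q') * R' * P' := by
        rw [hPQ, hQP, Matrix.one_mul, Matrix.mul_one, Matrix.one_mul]; abel
    _ = P' * (Q' + R'ᵀ * Q' + Q' * R') * P' := by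
        simp only [Matrix.mul_add, Matrix.add_mul, Matrix.mul_assoc]
    _ = (P' * Q') * (π * (R * B) * (π * (R * B))ᵀ) * (Q' * P') := by
        rw [hE']; simp only [Matrix.mul_assoc]
    _ = _ := by rw [hPQ, hQP, Matrix.one_mul, Matrix.mul_one]

lemma uniqueness {n m : ℕ} {A R Q₁ Q₂ : Matrix (Fin n) (Fin n) ℝ} {B : Matrix (Fin n) (Fin m) ℝ}
    (hR : (A - 1) * R = 1) (hA : Unmixed A)
    (X : Submodule ℝ (Fin n → ℝ)) (hX : ∀ v ∈ X, A *ᵥ v ∈ X)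
    (hs₁ : Q₁.IsSymm) (hk₁ : LinearMap.ker Q₁.mulVecLin = X)
    (hE₁ : Q₁ + Rᵀ * Q₁ + Q₁ * R = Q₁ * (R * B) * (R * B)ᵀ * Q₁)
    (hs₂ : Q₂.IsSymm) (hk₂ : LinearMap.ker Q₂.mulVecLin = X)
    (hE₂ : Q₂ + Rᵀ * Q₂ + Q₂ * R = Q₂ * (R * B) * (R * B)ᵀ * Q₂) : Q₁ = Q₂ := by
  obtain ⟨k, π, σ, hs, hker⟩ := exists_proj X
  have hXR := inv_invariant R (A - 1) hR X (shift_invariant A X hX)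
  have hR' : π * R = (π * R * σ) * π := intertwine hs hker (π * R) (fun v hv => by
    rw [← Matrix.mulVec_mulVec]; exact (hker _).mp (hXR v hv))
  have hA' : π * A = (π * A * σ) * π := intertwine hs hker (π * A) (fun v hv => by
    rw [← Matrix.mulVec_mulVec]; exact (hker _).mp (hX v hv))
  set R' := π * R * σ with hR'def
  set A' := π * A * σ
  obtain ⟨P₁, S₁, hPS₁, hQ₁, hP₁⟩ := compress π σ hs X hker R' hR' hs₁ hk₁ hE₁
  obtain ⟨P₂, S₂, hPS₂, hQ₂, hP₂⟩ := compress π σ hs X hker R' hR' hs₂ hk₂ hE₂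
  have hAR : (A' - 1) * R' = 1 := by
    calc (A' - 1) * R' = (A' * π) * R * σ - π * R * σ := by
          rw [hR'def, Matrix.sub_mul, Matrix.one_mul]; simp only [Matrix.mul_assoc]
      _ = π * ((A - 1) * R) * σ := by
          rw [← hA']; simp only [Matrix.sub_mul, Matrix.mul_sub, Matrix.one_mul, Matrix.mul_assoc]
      _ = 1 := by rw [hR, Matrix.mul_one, hs]
  have hRA : R'ᵀ * (A' - 1)ᵀ = 1 := by rw [← Matrix.transpose_mul, hAR, Matrix.transpose_one]
  have hD : (P₁ - P₂) + R' * (P₁ - P₂) + (P₁ - P₂) * R'ᵀ = 0 := by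
    have := hP₁.trans hP₂.symm
    rw [← sub_eq_zero] at this
    rw [← this, Matrix.mul_sub, Matrix.sub_mul]; abel
  have hD2 : A' * (P₁ - P₂) * A'ᵀ = P₁ - P₂ := by
    set D := P₁ - P₂
    have h1 := congrArg (fun M => (A' - 1) * M * (A' - 1)ᵀ) hD
    simp only [Matrix.mul_zero, Matrix.zero_mul] at h1
    have h2 : (A' - 1) * (D + R' * D + D * R'ᵀ) * (A' - 1)ᵀ
        = (A' - 1) * D * (A' - 1)ᵀ + ((A' - 1) * R') * D * (A' - 1)ᵀ
          + (A' - 1) * D * (R'ᵀ * (A' - 1)ᵀ) := by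
      simp only [Matrix.mul_add, Matrix.add_mul, Matrix.mul_assoc]
    rw [h2, hAR, hRA, Matrix.transpose_sub, Matrix.transpose_one] at h1
    rw [← sub_eq_zero, ← h1]
    noncomm_ring
  have hD0 := stein_unique A A' (P₁ - P₂) π σ hs hA' hA hD2
  have hPP : P₁ = P₂ := sub_eq_zero.mp hD0
  have hSS : S₁ = S₂ := by
    subst hPP
    have h1 := mul_eq_one_comm.mp hPS₁
    calc S₁ = S₁ * (P₁ * S₂) := by rw [hPS₂, Matrix.mul_one]
      _ = S₂ := by rw [← Matrix.mul_assoc, h1, Matrix.one_mul]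
  rw [hQ₁, hQ₂, hSS]

theorem CLMI_solutions_vs_invariant_subspaces
    (n m : ℕ) (A : Matrix (Fin n) (Fin n) ℝ) (B : Matrix (Fin n) (Fin m) ℝ)
    (C : Matrix (Fin m) (Fin n) ℝ) (D : Matrix (Fin m) (Fin m) ℝ)
    (hreach : Reachable A B) (hobs : Observable A C) (hap : AllPass A B C D) :
    (∀ X : Submodule ℝ (Fin n → ℝ), (∀ v ∈ X, A *ᵥ v ∈ X) →
      ∃ Q : Matrix (Fin n) (Fin n) ℝ, Q.IsSymm ∧
        (Matrix.fromBlocks (Aᵀ * Q * A - Q) (Aᵀ * Q * B)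
          (Bᵀ * Q * A) (Bᵀ * Q * B + 1)).PosSemidef ∧
        (Matrix.fromBlocks (Aᵀ * Q * A - Q) (Aᵀ * Q * B)
          (Bᵀ * Q * A) (Bᵀ * Q * B + 1)).rank = m ∧
        LinearMap.ker Q.mulVecLin = X) ∧
    (Unmixed A →
      (∀ X : Submodule ℝ (Fin n → ℝ), (∀ v ∈ X, A *ᵥ v ∈ X) →
        ∃! Q : Matrix (Fin n) (Fin n) ℝ, Q.IsSymm ∧
          (Matrix.fromBlocks (Aᵀ * Q * A - Q) (Aᵀ * Q * B)
            (Bᵀ * Q * A) (Bᵀ * Q * B + 1)).PosSemidef ∧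
          (Matrix.fromBlocks (Aᵀ * Q * A - Q) (Aᵀ * Q * B)
            (Bᵀ * Q * A) (Bᵀ * Q * B + 1)).rank = m ∧
          LinearMap.ker Q.mulVecLin = X) ∧
      (∀ Q : Matrix (Fin n) (Fin n) ℝ, Q.IsSymm →
        (Matrix.fromBlocks (Aᵀ * Q * A - Q) (Aᵀ * Q * B)
          (Bᵀ * Q * A) (Bᵀ * Q * B + 1)).PosSemidef →
        (Matrix.fromBlocks (Aᵀ * Q * A - Q) (Aᵀ * Q * B)
          (Bᵀ * Q * A) (Bᵀ * Q * B + 1)).rank = m →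
        ∀ v ∈ LinearMap.ker Q.mulVecLin, A *ᵥ v ∈ LinearMap.ker Q.mulVecLin)) := by
  obtain ⟨P, hPs, hP⟩ := exists_P A B C D hobs hap
  obtain ⟨u, hu⟩ := sub_one_unit hreach hP
  have hR : (A - 1) * (↑u⁻¹ : Matrix (Fin n) (Fin n) ℝ) = 1 := by rw [← hu, Units.mul_inv]
  refine ⟨fun X hX => existence hreach hR hPs hP X hX, fun hA => ⟨fun X hX => ?_, ?_⟩⟩
  · obtain ⟨Q, hQ⟩ := existence hreach hR hPs hP X hX
    refine ⟨Q, hQ, ?_⟩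
    rintro Q₂ ⟨hs₂, -, hr₂, hk₂⟩
    exact uniqueness hR hA X hX hs₂ hk₂ (eq_of_clmi A _ B Q₂ hR hr₂) hQ.1 hQ.2.2.2
      (eq_of_clmi A _ B Q hR hQ.2.2.1)
  · intro Q _ _ hr
    exact ker_invariant hR (eq_of_clmi A _ B Q hR hr)
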